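/- For all integers w, p0, p1, p2 and all nonnegative integers u, ℓ, one has G(w+1,u,ℓ;p0,p1,p2) = q^{−2u} G(w,u,ℓ;p0,p2,p1+1) − q^{2p0+ℓ} G(w,u−1,ℓ;p0,p1,p2), where G at the second argument u−1 is interpreted as 0 when u = 0. -/

import Mathlib

open Finset

noncomputable section

/-- The field `ℚ(q)` of rational functions over `ℚ`. -/
abbrev F : Type := RatFunc ℚ

/-- The indeterminate `q`. -/
noncomputable def qq : F := RatFunc.X

/-- The quantum integer `[n]` with base `v`: `(v^n - v^(-n))/(v - v⁻¹)`. -/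
noncomputable def qint (v : F) (n : ℤ) : F := (v ^ n - v ^ (-n)) / (v - v⁻¹)

/-- The quantum factorial `[m]! = [1][2]⋯[m]` with base `v`. -/
noncomputable def qfact (v : F) (m : ℕ) : F := ∏ k ∈ range m, qint v ((k : ℤ) + 1)

/-- The quantum binomial coefficient `C_v(n,d) = [n][n-1]⋯[n-d+1]/[d]!` for `d ≥ 0`,
and `0` for `d < 0`. -/
noncomputable def qbinom (v : F) (n d : ℤ) : F :=
  if d < 0 then 0
  else (∏ k ∈ range d.toNat, qint v (n - (k : ℤ))) / qfact v d.toNat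

/-- The function `G(w,u,ℓ;p0,p1,p2)` of [CLW, (5.1)]. -/
noncomputable def G (w : ℤ) (u ℓ : ℕ) (p0 p1 p2 : ℤ) : F :=
  (-1 : F) ^ w * qq ^ ((u : ℤ) ^ 2 - w * (u : ℤ) + (ℓ : ℤ) * (u : ℤ)) *
  ((∑ c ∈ range (u + 1), ∑ e ∈ range (u + 1 - c), ∑ t ∈ range (ℓ + 1),
      (let r : ℕ := u - c - e;
       if Even ((t : ℤ) + w - (r : ℤ)) then
         qq ^ (-(t : ℤ) * ((ℓ : ℤ) + (u : ℤ) - 1) - (u : ℤ) * ((c : ℤ) + (e : ℤ)) + 2 * (c : ℤ)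
               + (r : ℤ) * p0 + 2 * (c : ℤ) * p1 + 2 * (e : ℤ) * p2)
           * qbinom qq (ℓ : ℤ) (t : ℤ) * qbinom qq (w + (t : ℤ) + p0) (r : ℤ)
           * qbinom (qq ^ 2) ((w + (t : ℤ) - (r : ℤ)) / 2 + p1) (c : ℤ)
           * qbinom (qq ^ 2) ((w + (t : ℤ) - (r : ℤ)) / 2 + p2) (e : ℤ)
       else 0))
  - (∑ c ∈ range (u + 1), ∑ e ∈ range (u + 1 - c), ∑ t ∈ range (ℓ + 1),
      (let r : ℕ := u - c - e;
       if ¬ Even ((t : ℤ) + w - (r : ℤ)) then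
         qq ^ (-(t : ℤ) * ((ℓ : ℤ) + (u : ℤ) - 1) - ((u : ℤ) - 1) * ((c : ℤ) + (e : ℤ))
               + (r : ℤ) * p0 + 2 * (c : ℤ) * p1 + 2 * (e : ℤ) * p2)
           * qbinom qq (ℓ : ℤ) (t : ℤ) * qbinom qq (w + (t : ℤ) + p0) (r : ℤ)
           * qbinom (qq ^ 2) (1 + (w + (t : ℤ) - (r : ℤ) - 1) / 2 + p1) (c : ℤ)
           * qbinom (qq ^ 2) ((w + (t : ℤ) - (r : ℤ) - 1) / 2 + p2) (e : ℤ)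
       else 0)))

/-!
The two parity classes in `G` combine into one sum. With `m = w + t - r`, the `q²`-binomials have
top arguments `⌈m/2⌉ + p1` and `⌊m/2⌋ + p2`, and the sign is `(-1) ^ (t - r)`. Replacing `w` by
`w + 1` turns `(⌈m/2⌉, ⌊m/2⌋)` into `(⌊m/2⌋ + 1, ⌈m/2⌉)`, which exchanges the roles of `c` and `e`
and sends `(p1, p2)` to `(p2, p1 + 1)`, while replacing `r` by `r - 1` also shifts `m` by one.
The recursion therefore holds summand by summand, as the `q`-Pascal rule for
`C_q(w + 1 + t + p0, r)`.
-/

section QBinomial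

variable {v : F}

theorem qint_ne_zero (hv₀ : v ≠ 0) (hv : ¬IsOfFinOrder v) {n : ℕ} (hn : n ≠ 0) :
    qint v n ≠ 0 := by
  have sub_inv_ne_zero : ∀ k : ℕ, k ≠ 0 → v ^ k - (v ^ k)⁻¹ ≠ 0 := fun k hk h ↦ by
    have pow_eq_one : v ^ (k + k) = 1 := by
      rw [pow_add]
      exact (mul_eq_one_iff_eq_inv₀ (pow_ne_zero k hv₀)).2 (sub_eq_zero.1 h)
    exact hv (isOfFinOrder_iff_pow_eq_one.2 ⟨k + k, by omega, pow_eq_one⟩)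
  rw [qint, zpow_neg, zpow_natCast]
  exact div_ne_zero (sub_inv_ne_zero n hn) (by simpa using sub_inv_ne_zero 1 one_ne_zero)

theorem qint_add (hv₀ : v ≠ 0) (m n : ℤ) :
    qint v (m + n) = v ^ (-n) * qint v m + v ^ m * qint v n := by
  simp only [qint, mul_div_assoc', ← add_div, mul_sub, ← zpow_add₀ hv₀]
  ring_nf

theorem qbinom_of_neg (n : ℤ) {d : ℤ} (hd : d < 0) : qbinom v n d = 0 := if_pos hd

theorem qbinom_natCast (n : ℤ) (k : ℕ) :
    qbinom v n k = (∏ j ∈ range k, qint v (n - j)) / qfact v k := by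
  simp [qbinom]

theorem qbinom_zero_right (n : ℤ) : qbinom v n 0 = 1 := by
  simp [qbinom, qfact]

theorem qfact_succ (k : ℕ) : qfact v (k + 1) = qfact v k * qint v (k + 1) :=
  prod_range_succ _ _

theorem qbinom_succ_right (n : ℤ) (k : ℕ) :
    qbinom v n (k + 1) = qbinom v n k * (qint v (n - k) / qint v (k + 1)) := by
  rw [← Nat.cast_add_one, qbinom_natCast, qbinom_natCast, qfact_succ, prod_range_succ,
    div_mul_div_comm, Nat.cast_add_one]

theorem qbinom_succ_succ (n : ℤ) (k : ℕ) :
    qbinom v (n + 1) (k + 1) = qbinom v n k * (qint v (n + 1) / qint v (k + 1)) := by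
  rw [← Nat.cast_add_one, qbinom_natCast, qbinom_natCast, qfact_succ, prod_range_succ',
    div_mul_div_comm]
  simp

theorem qbinom_pascal (hv₀ : v ≠ 0) (hv : ¬IsOfFinOrder v) (n d : ℤ) :
    qbinom v (n + 1) d
      = v ^ (-d) * qbinom v n d + v ^ (n + 1 - d) * qbinom v n (d - 1) := by
  rcases lt_trichotomy d 0 with hd | rfl | hd
  · simp [qbinom_of_neg _ hd, qbinom_of_neg n (show d - 1 < 0 by omega)]
  · simp [qbinom_zero_right, qbinom_of_neg]
  · obtain ⟨k, rfl⟩ : ∃ k : ℕ, d = k + 1 := ⟨(d - 1).toNat, by omega⟩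
    have qint_k : qint v (k + 1) ≠ 0 := mod_cast qint_ne_zero hv₀ hv k.succ_ne_zero
    have split : qint v (n + 1)
        = v ^ (-(k + 1 : ℤ)) * qint v (n - k) + v ^ (n - k) * qint v (k + 1) := by
      rw [← qint_add hv₀, ← add_assoc, sub_add_cancel]
    rw [qbinom_succ_succ, qbinom_succ_right, split, add_sub_cancel_right, add_sub_add_right_eq_sub]
    field_simp

end QBinomial

theorem not_isOfFinOrder_ratFunc_X (R : Type*) [CommRing R] [IsDomain R] :
    ¬IsOfFinOrder (RatFunc.X : RatFunc R) := fun h ↦ by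
  obtain ⟨n, hn, hpow⟩ := isOfFinOrder_iff_pow_eq_one.1 h
  exact RatFunc.transcendental_X.pow hn (hpow ▸ isAlgebraic_one)

theorem qq_ne_zero : qq ≠ 0 := RatFunc.X_ne_zero

theorem not_isOfFinOrder_qq : ¬IsOfFinOrder qq := not_isOfFinOrder_ratFunc_X ℚ

/-- The exponent of `q` in the `(c, e, r, t)` summand of `G w u ℓ p0 p1 p2`, where `u = c + e + r`
and `m = w + t - r`; the residue `m % 2` merges the exponents of the even and the odd sum. -/
def summandExponent (w ℓ p0 p1 p2 c e r t : ℤ) : ℤ :=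
  let u := c + e + r
  let m := w + t - r
  u ^ 2 - w * u + ℓ * u - t * (ℓ + u - 1) - u * (c + e) + r * p0
    + (2 * p1 + 2 - m % 2) * c + (2 * p2 + m % 2) * e

/-- The `(c, e, r, t)` summand of `G w u ℓ p0 p1 p2` with its prefactor, where `u = c + e + r` and
`m = w + t - r`. It covers both parities of `m`, as `(m + 1) / 2` and `m / 2` are `⌈m/2⌉` and
`⌊m/2⌋`. The indices are integers, so that `r - 1` needs no truncation. -/
def summand (w ℓ p0 p1 p2 c e r t : ℤ) : F :=
  let m := w + t - r
  (-1) ^ (t - r) * qq ^ summandExponent w ℓ p0 p1 p2 c e r t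
    * qbinom qq ℓ t * qbinom qq (w + t + p0) r
    * qbinom (qq ^ 2) ((m + 1) / 2 + p1) c * qbinom (qq ^ 2) (m / 2 + p2) e

theorem summand_of_neg (w ℓ p0 p1 p2 c e t : ℤ) {r : ℤ} (hr : r < 0) :
    summand w ℓ p0 p1 p2 c e r t = 0 := by
  simp [summand, qbinom_of_neg _ hr]

theorem summand_of_even {w u ℓ p0 p1 p2 c e r t : ℤ} (hu : c + e + r = u)
    (hm : Even (t + w - r)) :
    summand w ℓ p0 p1 p2 c e r t
      = (-1) ^ w * qq ^ (u ^ 2 - w * u + ℓ * u)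
        * (qq ^ (-t * (ℓ + u - 1) - u * (c + e) + 2 * c + r * p0 + 2 * c * p1 + 2 * e * p2)
          * qbinom qq ℓ t * qbinom qq (w + t + p0) r
          * qbinom (qq ^ 2) ((w + t - r) / 2 + p1) c
          * qbinom (qq ^ 2) ((w + t - r) / 2 + p2) e) := by
  subst hu
  have residue : (w + t - r) % 2 = 0 := by rw [Int.even_iff] at hm; omega
  have ceil_eq_floor : (w + t - r + 1) / 2 = (w + t - r) / 2 := by omega
  have sign : (-1 : F) ^ (t - r) = (-1) ^ w := by
    rw [neg_one_zpow_eq_ite, neg_one_zpow_eq_ite]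
    grind
  simp only [summand, summandExponent, residue, ceil_eq_floor, sign, ← mul_assoc]
  rw [mul_assoc ((-1 : F) ^ w) (qq ^ _) (qq ^ _), ← zpow_add₀ qq_ne_zero]
  ring_nf

theorem summand_of_odd {w u ℓ p0 p1 p2 c e r t : ℤ} (hu : c + e + r = u)
    (hm : ¬Even (t + w - r)) :
    summand w ℓ p0 p1 p2 c e r t
      = (-1) ^ w * qq ^ (u ^ 2 - w * u + ℓ * u)
        * -(qq ^ (-t * (ℓ + u - 1) - (u - 1) * (c + e) + r * p0 + 2 * c * p1 + 2 * e * p2)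
          * qbinom qq ℓ t * qbinom qq (w + t + p0) r
          * qbinom (qq ^ 2) (1 + (w + t - r - 1) / 2 + p1) c
          * qbinom (qq ^ 2) ((w + t - r - 1) / 2 + p2) e) := by
  subst hu
  have residue : (w + t - r) % 2 = 1 := by rw [Int.even_iff] at hm; omega
  have ceil_eq : (w + t - r + 1) / 2 = 1 + (w + t - r - 1) / 2 := by omega
  have floor_eq : (w + t - r) / 2 = (w + t - r - 1) / 2 := by omega
  have sign : (-1 : F) ^ (t - r) = -(-1) ^ w := by
    rw [neg_one_zpow_eq_ite, neg_one_zpow_eq_ite]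
    grind
  simp only [summand, summandExponent, residue, ceil_eq, floor_eq, sign, mul_neg, neg_mul,
    ← mul_assoc]
  rw [mul_assoc ((-1 : F) ^ w) (qq ^ _) (qq ^ _), ← zpow_add₀ qq_ne_zero]
  ring_nf

theorem G_eq_sum_summand (w : ℤ) (u ℓ : ℕ) (p0 p1 p2 : ℤ) :
    G w u ℓ p0 p1 p2 = ∑ c ∈ range (u + 1), ∑ e ∈ range (u + 1 - c), ∑ t ∈ range (ℓ + 1),
      summand w ℓ p0 p1 p2 c e (u - c - e) t := by
  simp only [G, ← sum_sub_distrib, mul_sum]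
  refine sum_congr rfl fun c hc ↦ sum_congr rfl fun e he ↦ sum_congr rfl fun t _ ↦ ?_
  rw [mem_range] at hc he
  have cast_r : ((u - c - e : ℕ) : ℤ) = u - c - e := by omega
  have total : (c + e + (u - c - e) : ℤ) = u := by ring
  rw [cast_r]
  by_cases hm : Even ((t : ℤ) + w - (u - c - e))
  · simp only [hm, not_true_eq_false, if_true, if_false, sub_zero, summand_of_even total hm]
  · simp only [hm, not_false_eq_true, if_true, if_false, zero_sub, summand_of_odd total hm]

theorem summandExponent_succ_left (w ℓ p0 p1 p2 c e r t : ℤ) :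
    summandExponent (w + 1) ℓ p0 p1 p2 c e r t - r
      = -2 * (c + e + r) + summandExponent w ℓ p0 p2 (p1 + 1) e c r t := by
  have residue : (w + 1 + t - r) % 2 = 1 - (w + t - r) % 2 := by omega
  simp only [summandExponent, residue]
  ring

theorem summandExponent_succ_left_pred (w ℓ p0 p1 p2 c e r t : ℤ) :
    summandExponent (w + 1) ℓ p0 p1 p2 c e r t + (w + t + p0 + 1 - r)
      = 2 * p0 + ℓ + summandExponent w ℓ p0 p1 p2 c e (r - 1) t := by
  have shift : w + t - (r - 1) = w + 1 + t - r := by ring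
  simp only [summandExponent, shift]
  ring

theorem summand_succ_left (w ℓ p0 p1 p2 c e r t : ℤ) :
    summand (w + 1) ℓ p0 p1 p2 c e r t
      = qq ^ (-2 * (c + e + r)) * summand w ℓ p0 p2 (p1 + 1) e c r t
        - qq ^ (2 * p0 + ℓ) * summand w ℓ p0 p1 p2 c e (r - 1) t := by
  have pascal := qbinom_pascal qq_ne_zero not_isOfFinOrder_qq (w + t + p0) r
  have power_swap : qq ^ summandExponent (w + 1) ℓ p0 p1 p2 c e r t * qq ^ (-r)
      = qq ^ (-2 * (c + e + r)) * qq ^ summandExponent w ℓ p0 p2 (p1 + 1) e c r t := by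
    rw [← zpow_add₀ qq_ne_zero, ← zpow_add₀ qq_ne_zero, ← sub_eq_add_neg,
      summandExponent_succ_left]
  have power_pred : qq ^ summandExponent (w + 1) ℓ p0 p1 p2 c e r t * qq ^ (w + t + p0 + 1 - r)
      = qq ^ (2 * p0 + ℓ) * qq ^ summandExponent w ℓ p0 p1 p2 c e (r - 1) t := by
    rw [← zpow_add₀ qq_ne_zero, ← zpow_add₀ qq_ne_zero, summandExponent_succ_left_pred]
  have sign : (-1 : F) ^ (t - (r - 1)) = -(-1) ^ (t - r) := by
    rw [← sub_add, zpow_add_one₀ (neg_ne_zero.2 one_ne_zero), mul_neg_one]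
  have ceil_swap : (w + 1 + t - r + 1) / 2 + p1 = (w + t - r) / 2 + (p1 + 1) := by omega
  have floor_swap : (w + 1 + t - r) / 2 = (w + t - r + 1) / 2 := by ring_nf
  have top_succ : w + 1 + t + p0 = w + t + p0 + 1 := by ring
  have half_pred : w + t - (r - 1) = w + 1 + t - r := by ring
  simp only [summand, half_pred, ceil_swap, floor_swap, sign, top_succ, pascal]
  generalize qbinom (qq ^ 2) ((w + t - r) / 2 + (p1 + 1)) c = C,
    qbinom (qq ^ 2) ((w + t - r + 1) / 2 + p2) e = E, qbinom qq ℓ t = T,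
    qbinom qq (w + t + p0) r = R, qbinom qq (w + t + p0) (r - 1) = S
  linear_combination (-1) ^ (t - r) * T * C * E * (R * power_swap + S * power_pred)

theorem sum_range_triangle_eq_box {M : Type*} [AddCommMonoid M] (f : ℕ → ℕ → M) {u N : ℕ}
    (hu : u < N) (hf : ∀ c e, u < c + e → f c e = 0) :
    ∑ c ∈ range (u + 1), ∑ e ∈ range (u + 1 - c), f c e = ∑ c ∈ range N, ∑ e ∈ range N, f c e := by
  have row (c : ℕ) : ∑ e ∈ range (u + 1 - c), f c e = ∑ e ∈ range N, f c e :=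
    sum_subset (range_subset_range.2 (by omega)) fun e _ he ↦
      hf c e (by rw [mem_range] at he; omega)
  simp only [row]
  exact sum_subset (range_subset_range.2 hu) fun c _ hc ↦ sum_eq_zero fun e _ ↦
    hf c e (by rw [mem_range] at hc; omega)

/-- The sum of all summands with `c, e < N`, for an integer `u`. Choices of `c` and `e` with
`u < c + e` contribute zero, so for `u < N` this is `G`, extended by zero to negative `u`. -/
def boxSum (N : ℕ) (w u : ℤ) (ℓ : ℕ) (p0 p1 p2 : ℤ) : F :=
  ∑ c ∈ range N, ∑ e ∈ range N, ∑ t ∈ range (ℓ + 1), summand w ℓ p0 p1 p2 c e (u - c - e) t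

theorem boxSum_of_neg (N : ℕ) (w : ℤ) {u : ℤ} (hu : u < 0) (ℓ : ℕ) (p0 p1 p2 : ℤ) :
    boxSum N w u ℓ p0 p1 p2 = 0 :=
  sum_eq_zero fun _ _ ↦ sum_eq_zero fun _ _ ↦ sum_eq_zero fun _ _ ↦
    summand_of_neg _ _ _ _ _ _ _ _ (by omega)

theorem boxSum_natCast {N u : ℕ} (hu : u < N) (w : ℤ) (ℓ : ℕ) (p0 p1 p2 : ℤ) :
    boxSum N w u ℓ p0 p1 p2 = G w u ℓ p0 p1 p2 := by
  rw [G_eq_sum_summand, boxSum]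
  refine (sum_range_triangle_eq_box _ hu fun c e hce ↦ sum_eq_zero fun t _ ↦ ?_).symm
  exact summand_of_neg _ _ _ _ _ _ _ _ (by omega)

theorem boxSum_succ_left (N : ℕ) (w u : ℤ) (ℓ : ℕ) (p0 p1 p2 : ℤ) :
    boxSum N (w + 1) u ℓ p0 p1 p2
      = qq ^ (-2 * u) * boxSum N w u ℓ p0 p2 (p1 + 1)
        - qq ^ (2 * p0 + ℓ) * boxSum N w (u - 1) ℓ p0 p1 p2 := by
  have swap : boxSum N w u ℓ p0 p2 (p1 + 1)
      = ∑ c ∈ range N, ∑ e ∈ range N, ∑ t ∈ range (ℓ + 1),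
          summand w ℓ p0 p2 (p1 + 1) e c (u - c - e) t := by
    rw [boxSum, sum_comm]
    simp only [sub_right_comm]
  rw [swap, boxSum, boxSum]
  simp only [mul_sum, ← sum_sub_distrib]
  refine sum_congr rfl fun c _ ↦ sum_congr rfl fun e _ ↦ sum_congr rfl fun t _ ↦ ?_
  rw [summand_succ_left]
  ring_nf

/-- Recursion in `w`:
`G(w+1,u,ℓ;p0,p1,p2) = q^{−2u} G(w,u,ℓ;p0,p2,p1+1) − q^{2p0+ℓ} G(w,u−1,ℓ;p0,p1,p2)`,
where the term with second argument `u−1` is interpreted as `0` when `u = 0`. -/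
theorem G_rec_w (w p0 p1 p2 : ℤ) (u ℓ : ℕ) :
    G (w + 1) u ℓ p0 p1 p2
      = qq ^ (-2 * (u : ℤ)) * G w u ℓ p0 p2 (p1 + 1)
        - qq ^ (2 * p0 + (ℓ : ℤ)) * (if u = 0 then 0 else G w (u - 1) ℓ p0 p1 p2) := by
  have box := boxSum_succ_left (u + 1) w u ℓ p0 p1 p2
  rw [boxSum_natCast u.lt_succ_self, boxSum_natCast u.lt_succ_self] at box
  cases u with
  | zero => simpa [boxSum_of_neg] using box
  | succ n =>
    rw [Nat.cast_succ, add_sub_cancel_right, boxSum_natCast (by omega)] at box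
    simpa using box

end
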